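/- For every integer n ≥ 6, the metric dimension of the convex polytope graph Δ_n equals 3; that is, Δ_n has a resolving set of cardinality 3 and no resolving set of cardinality 2. -/

import Mathlib

/-- Vertices of the heptagonal circular ladder: four families indexed by `ZMod n`. -/
inductive HCLVertex (n : ℕ) : Type
  | p (t : ZMod n) : HCLVertex n
  | q (t : ZMod n) : HCLVertex n
  | r (t : ZMod n) : HCLVertex n
  | s (t : ZMod n) : HCLVertex n
deriving DecidableEq

/-- Base relation giving the edges of the heptagonal circular ladder `Γ_n`:
`p_t p_{t+1}`, `p_t q_t`, `q_t r_t`, `r_t s_t`, `s_t r_{t+1}` (indices mod `n`). -/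
def gammaRel (n : ℕ) : HCLVertex n → HCLVertex n → Prop
  | .p t, .p u => u = t + 1
  | .p t, .q u => u = t
  | .q t, .r u => u = t
  | .r t, .s u => u = t
  | .s t, .r u => u = t + 1
  | _, _ => False

/-- The heptagonal circular ladder `Γ_n`. -/
def Gamma (n : ℕ) : SimpleGraph (HCLVertex n) :=
  SimpleGraph.fromRel (gammaRel n)

/-- The extra edges `r_t q_{t+1}` added to `Γ_n` to obtain `Δ_n`. -/
def deltaRel (n : ℕ) : HCLVertex n → HCLVertex n → Prop
  | .r t, .q u => u = t + 1
  | _, _ => False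

/-- The convex polytope graph `Δ_n`, obtained from `Γ_n` by adding the edges `r_t q_{t+1}`. -/
def Delta (n : ℕ) : SimpleGraph (HCLVertex n) :=
  SimpleGraph.fromRel (fun v w => gammaRel n v w ∨ deltaRel n v w)

/-- `W` is a resolving set of `G`: every pair of distinct vertices is distinguished by
its distance to some vertex of `W`. -/
def IsResolving {V : Type*} (G : SimpleGraph V) (W : Set V) : Prop :=
  ∀ u v : V, u ≠ v → ∃ w ∈ W, G.dist w u ≠ G.dist w v

/-- Distance from a vertex `x` to an edge `e = yz`: `min (d x y) (d x z)`. -/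
noncomputable def edgeDist {V : Type*} (G : SimpleGraph V) (x : V) (e : Sym2 V) : ℕ :=
  Sym2.lift ⟨fun y z => min (G.dist x y) (G.dist x z), fun y z => min_comm _ _⟩ e

/-- `W` is an edge resolving set of `G`: every pair of distinct edges is distinguished by
its distance to some vertex of `W`. -/
def IsEdgeResolving {V : Type*} (G : SimpleGraph V) (W : Set V) : Prop :=
  ∀ e ∈ G.edgeSet, ∀ f ∈ G.edgeSet, e ≠ f → ∃ w ∈ W, edgeDist G w e ≠ edgeDist G w f

/-!
A function `f` vanishing at `x` that elsewhere exceeds the minimum of `f` over the neighbours by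
exactly one is the distance from `x`; this gives closed forms for all distances of `Δ_n`.

Two landmarks are never enough. The four neighbours of `r t` are all at distance `1` from it and
have at most three distances to a second landmark. If neither landmark is an `r`, there are two
vertices a step or two apart that look alike from both. Typically they lie just beyond a landmark,
where both landmarks are seen in the same direction; other twins are needed when the landmarks are
almost antipodal, so that a reflection nearly preserves them, or very close to each other.

Three landmarks `p (-1)`, `p 0` and `p ⌈n / 2⌉` are enough for `4 ≤ n`. Comparing the distances to
the first two tells on which side of the ring a vertex lies. Along one side the distance to
`p 0` increases while the distance to the almost antipodal landmark decreases, or conversely, so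
that together they determine the level and the column.
-/

open HCLVertex

theorem dist_eq_of_isLeast {V : Type*} {G : SimpleGraph V} {x : V} {f : V → ℕ} (hx : f x = 0)
    (hf : ∀ y ≠ x, IsLeast ((f · + 1) '' G.neighborSet y) (f y)) :
    G.dist x = f := by
  funext y
  have le_length : ∀ {y : V} (w : G.Walk y x), f y ≤ w.length := by
    intro y w
    induction w with
    | nil => exact hx.le
    | @cons u v x huv _ ih =>
      obtain rfl | hu := eq_or_ne u x
      · simp [hx]
      · exact ((hf u hu).2 ⟨v, huv, rfl⟩).trans (Nat.succ_le_succ (ih hx hf))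
  have exists_walk : ∀ m y, f y = m → ∃ w : G.Walk y x, w.length = m := by
    intro m
    induction m with
    | zero =>
      intro y hy
      obtain rfl | hne := eq_or_ne y x
      · exact ⟨.nil, rfl⟩
      · obtain ⟨z, -, hz⟩ := (hf y hne).1
        simp [hy] at hz
    | succ m ih =>
      intro y hy
      obtain ⟨z, hyz, hz⟩ := (hf y (by rintro rfl; omega)).1
      obtain ⟨w, hw⟩ := ih z (by simpa [hy] using hz)
      exact ⟨.cons hyz w, congrArg (· + 1) hw⟩
  obtain ⟨w, hw⟩ := exists_walk _ y rfl
  obtain ⟨w', hw'⟩ := w.reachable.exists_walk_length_eq_dist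
  rw [SimpleGraph.dist_comm]
  exact le_antisymm (hw ▸ SimpleGraph.dist_le w) (hw' ▸ le_length w')

theorem not_isResolving_pair {V : Type*} {G : SimpleGraph V} {a b u v : V} (huv : u ≠ v)
    (ha : G.dist a u = G.dist a v) (hb : G.dist b u = G.dist b v) :
    ¬ IsResolving G {a, b} := by
  intro h
  obtain ⟨w, rfl | rfl, hw⟩ := h u v huv
  exacts [hw ha, hw hb]

/-- The neighbours of `a` have at most three different distances to `b`. -/
theorem not_isResolving_pair_of_three_lt_encard {V : Type*} {G : SimpleGraph V} {a : V}
    (ha : 3 < (G.neighborSet a).encard) (b : V) : ¬ IsResolving G {a, b} := by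
  let D : Finset ℕ := {G.dist b a, G.dist b a + 1, G.dist b a - 1}
  have hD : (D : Set ℕ).encard < (G.neighborSet a).encard := by
    rw [Set.encard_coe_eq_coe_finsetCard]
    exact (Nat.cast_le.2 Finset.card_le_three).trans_lt ha
  have maps_to : Set.MapsTo (G.dist b) (G.neighborSet a) D := by
    intro u hu
    simpa [D] using SimpleGraph.Adj.diff_dist_adj (u := b) hu
  obtain ⟨u, hu, v, hv, huv, hb⟩ := Set.exists_ne_map_eq_of_encard_lt_of_maps_to hD maps_to
  exact not_isResolving_pair huv
    ((SimpleGraph.dist_eq_one_iff_adj.2 hu).trans (SimpleGraph.dist_eq_one_iff_adj.2 hv).symm) hb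

theorem intCast_ne_intCast {n : ℕ} {a b : ℤ} (h₁ : a < b) (h₂ : b < a + n) :
    (a : ZMod n) ≠ b := by
  intro h
  have := Int.eq_zero_of_dvd_of_nonneg_of_lt (by omega) (by omega)
    ((ZMod.intCast_eq_intCast_iff_dvd_sub a b n).1 h)
  omega

section ZMod

variable {n : ℕ} [NeZero n]

theorem val_intCast_eq_ite {z : ℤ} (h₁ : -(n : ℤ) ≤ z) (h₂ : z < n) :
    (z : ZMod n).val = if z < 0 then (z + n).toNat else z.toNat := by
  have hval : ((z : ZMod n).val : ℤ) = z % n := ZMod.val_intCast z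
  split_ifs with hz
  · rw [← Int.add_emod_right, Int.emod_eq_of_lt (by omega) (by omega)] at hval
    omega
  · rw [Int.emod_eq_of_lt (by omega) h₂] at hval
    omega

theorem val_sub_natCast_eq_ite (t : ZMod n) {m : ℕ} (hm : m ≤ n) :
    (t - m).val = if t.val < m then t.val + n - m else t.val - m := by
  have ht := t.val_lt
  have h := val_intCast_eq_ite (n := n) (z := t.val - m) (by omega) (by omega)
  simp only [Int.cast_sub, Int.cast_natCast, ZMod.natCast_zmod_val] at h
  rw [h]
  split_ifs <;> omega

theorem val_sub_one_eq_ite (t : ZMod n) :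
    (t - 1).val = if t.val = 0 then n - 1 else t.val - 1 := by
  have h := val_sub_natCast_eq_ite t (m := 1) NeZero.one_le
  rw [Nat.cast_one] at h
  rw [h]
  split_ifs <;> omega

theorem val_add_one_eq_ite (t : ZMod n) :
    (t + 1).val = if t.val + 1 = n then 0 else t.val + 1 := by
  have ht := t.val_lt
  have h := val_sub_natCast_eq_ite t (m := n - 1) (by omega)
  rw [Nat.cast_pred (NeZero.pos n), ZMod.natCast_self, zero_sub, sub_neg_eq_add] at h
  rw [h]
  split_ifs <;> omega

theorem forall_zmod_of_forall_intCast {P : ZMod n → ZMod n → Prop}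
    (h : ∀ a b : ℤ, a ≤ b → b < a + n → P a b) (c d : ZMod n) : P c d := by
  have hlt := (d - c).val_lt
  have := h c.val (c.val + (d - c).val) (by omega) (by omega)
  simpa using this

theorem forall_ne_zmod_of_forall_intCast {P : ZMod n → ZMod n → Prop} (symm : ∀ c d, P c d → P d c)
    (h : ∀ a b : ℤ, a < b → 2 * (b - a) ≤ n → P a b) (c d : ZMod n) : c ≠ d → P c d := by
  revert c d
  refine forall_zmod_of_forall_intCast fun a b hab hba hne ↦ ?_
  obtain hle | hlt := le_or_gt (2 * (b - a)) n
  · exact h a b (hab.lt_of_ne (by rintro rfl; exact hne rfl)) hle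
  · have := h b (a + n) (by omega) (by omega)
    exact symm _ _ (by simpa using this)

end ZMod

namespace Delta

variable {n : ℕ}

section neighborSet

variable (t : ZMod n)

theorem neighborSet_p (hn : 1 < n) :
    (Delta n).neighborSet (p t) = {p (t - 1), p (t + 1), q t} := by
  have : Fact (1 < n) := ⟨hn⟩
  have hne : t + 1 ≠ t := by simp
  ext (u | u | u | u) <;> simp [Delta, gammaRel, deltaRel, eq_sub_iff_add_eq, eq_comm]
  grind

theorem neighborSet_q : (Delta n).neighborSet (q t) = {p t, r (t - 1), r t} := by
  ext (u | u | u | u) <;> simp [Delta, gammaRel, deltaRel, eq_sub_iff_add_eq, eq_comm]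
  grind

theorem neighborSet_r : (Delta n).neighborSet (r t) = {q t, q (t + 1), s (t - 1), s t} := by
  ext (u | u | u | u) <;> simp [Delta, gammaRel, deltaRel, eq_sub_iff_add_eq] <;> grind

theorem neighborSet_s : (Delta n).neighborSet (s t) = {r t, r (t + 1)} := by
  ext (u | u | u | u) <;> simp [Delta, gammaRel, deltaRel, eq_comm, or_comm]

end neighborSet

theorem dist_eq_of_eq_min (hn : 1 < n) {x : HCLVertex n} {f : HCLVertex n → ℕ} (hx : f x = 0)
    (hp : ∀ t, p t ≠ x → f (p t) = min (f (p (t - 1))) (min (f (p (t + 1))) (f (q t))) + 1)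
    (hq : ∀ t, q t ≠ x → f (q t) = min (f (p t)) (min (f (r (t - 1))) (f (r t))) + 1)
    (hr : ∀ t, r t ≠ x →
      f (r t) = min (f (q t)) (min (f (q (t + 1))) (min (f (s (t - 1))) (f (s t)))) + 1)
    (hs : ∀ t, s t ≠ x → f (s t) = min (f (r t)) (f (r (t + 1))) + 1) :
    (Delta n).dist x = f := by
  refine dist_eq_of_isLeast hx ?_
  rintro (t | t | t | t) ht
  · rw [neighborSet_p t hn, hp t ht]
    simp only [Set.image_insert_eq, Set.image_singleton, ← min_add_add_right]
    exact isLeast_singleton.insert _ |>.insert _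
  · rw [neighborSet_q, hq t ht]
    simp only [Set.image_insert_eq, Set.image_singleton, ← min_add_add_right]
    exact isLeast_singleton.insert _ |>.insert _
  · rw [neighborSet_r, hr t ht]
    simp only [Set.image_insert_eq, Set.image_singleton, ← min_add_add_right]
    exact isLeast_singleton.insert _ |>.insert _ |>.insert _
  · rw [neighborSet_s, hs t ht]
    simp only [Set.image_insert_eq, Set.image_singleton, ← min_add_add_right]
    exact isLeast_singleton.insert _

section dist

variable (hn : 3 ≤ n) (c : ZMod n)
include hn

theorem dist_p : (Delta n).dist (p c) = fun
    | p t => let v := (t - c).val; min v (n - v)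
    | q t => let v := (t - c).val; 1 + min v (n - v)
    | r t => let v := (t - c).val; 2 + min v (n - 1 - v)
    | s t => let v := (t - c).val; 3 + min v (n - 2 - v) := by
  have : NeZero n := ⟨by omega⟩
  have val_eq_zero (t) : (t - c).val = 0 ↔ t = c := by simp [sub_eq_zero]
  refine dist_eq_of_eq_min (by omega) (by simp) ?_ ?_ ?_ ?_ <;> intro t ht <;>
    have hv := (t - c).val_lt <;>
    simp only [ne_eq, p.injEq, ← val_eq_zero, add_sub_right_comm t 1 c, sub_right_comm t 1 c,
      val_add_one_eq_ite, val_sub_one_eq_ite] at ht ⊢ <;>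
    grind

theorem dist_q : (Delta n).dist (q c) = fun
    | p t => let v := (t - c).val; 1 + min v (n - v)
    | q t => let v := (t - c).val; min (2 * min v (n - v)) (min v (n - v) + 2)
    | r t => let v := (t - c).val; 1 + min (2 * min v (n - 1 - v)) (min v (n - 1 - v) + 2)
    | s t => let v := (t - c).val; 2 + min (2 * min v (n - 2 - v)) (min v (n - 2 - v) + 2) := by
  have : NeZero n := ⟨by omega⟩
  have val_eq_zero (t) : (t - c).val = 0 ↔ t = c := by simp [sub_eq_zero]
  refine dist_eq_of_eq_min (by omega) (by simp) ?_ ?_ ?_ ?_ <;> intro t ht <;>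
    have hv := (t - c).val_lt <;>
    simp only [ne_eq, q.injEq, ← val_eq_zero, add_sub_right_comm t 1 c, sub_right_comm t 1 c,
      val_add_one_eq_ite, val_sub_one_eq_ite] at ht ⊢ <;>
    grind

theorem dist_r : (Delta n).dist (r c) = fun
    | p t => let v := (t - c).val; 2 + min (v - 1) (n - v)
    | q t => let v := (t - c).val; 1 + min (2 * min (v - 1) (n - v)) (min (v - 1) (n - v) + 2)
    | r t => let v := (t - c).val; min (2 * min v (n - v)) (min v (n - v) + 3)
    | s t => let v := (t - c).val; 1 + min (2 * min v (n - 1 - v)) (min v (n - 1 - v) + 3) := by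
  have : NeZero n := ⟨by omega⟩
  have val_eq_zero (t) : (t - c).val = 0 ↔ t = c := by simp [sub_eq_zero]
  refine dist_eq_of_eq_min (by omega) (by simp) ?_ ?_ ?_ ?_ <;> intro t ht <;>
    have hv := (t - c).val_lt <;>
    simp only [ne_eq, r.injEq, ← val_eq_zero, add_sub_right_comm t 1 c, sub_right_comm t 1 c,
      val_add_one_eq_ite, val_sub_one_eq_ite] at ht ⊢ <;>
    grind

theorem dist_s : (Delta n).dist (s c) = fun
    | p t => let v := (t - c).val; 3 + min (v - 2) (n - v)
    | q t => let v := (t - c).val; 2 + min (2 * min (v - 2) (n - v)) (min (v - 2) (n - v) + 2)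
    | r t => let v := (t - c).val; 1 + min (2 * min (v - 1) (n - v)) (min (v - 1) (n - v) + 3)
    | s t => let v := (t - c).val; min (2 * min v (n - v)) (min v (n - v) + 4) := by
  have : NeZero n := ⟨by omega⟩
  have val_eq_zero (t) : (t - c).val = 0 ↔ t = c := by simp [sub_eq_zero]
  refine dist_eq_of_eq_min (by omega) (by simp) ?_ ?_ ?_ ?_ <;> intro t ht <;>
    have hv := (t - c).val_lt <;>
    simp only [ne_eq, s.injEq, ← val_eq_zero, add_sub_right_comm t 1 c, sub_right_comm t 1 c,
      val_add_one_eq_ite, val_sub_one_eq_ite] at ht ⊢ <;>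
    grind (splits := 15)

end dist

theorem not_isResolving_r (hn : 1 < n) (t : ZMod n) (b : HCLVertex n) :
    ¬ IsResolving (Delta n) {r t, b} := by
  have : Fact (1 < n) := ⟨hn⟩
  refine not_isResolving_pair_of_three_lt_encard ?_ b
  have hq : q t ≠ q (t + 1) := by simp
  have hs : s (t - 1) ≠ s t := by simp
  have henc : (Delta n).neighborSet (r t) =
      (({q t, q (t + 1), s (t - 1), s t} : Finset (HCLVertex n)) : Set (HCLVertex n)) := by
    simp [neighborSet_r]
  rw [henc, Set.encard_coe_eq_coe_finsetCard, Finset.card_insert_of_notMem (by simp [hq]),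
    Finset.card_insert_of_notMem (by simp), Finset.card_pair hs]
  norm_num

section LowerBound

variable (hn : 3 ≤ n) {a b : ℤ}
include hn

theorem not_isResolving_p_p (hab : a < b) (hba : 2 * (b - a) ≤ n) :
    ¬ IsResolving (Delta n) {p a, p b} := by
  have : NeZero n := ⟨by omega⟩
  obtain h | h | h : 2 * (b - a) + 2 ≤ n ∨ 2 * (b - a) = n ∨ 2 * (b - a) + 1 = n := by omega
  case' inl => refine not_isResolving_pair (u := p (a - 1 : ℤ)) (v := q a) nofun ?_ ?_
  case' inr.inl =>
    refine not_isResolving_pair (u := s (a - 2 : ℤ)) (v := s a)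
      (mt s.inj (intCast_ne_intCast (by omega) (by omega))) ?_ ?_
  case' inr.inr => refine not_isResolving_pair (u := q (a - 1 : ℤ)) (v := r a) nofun ?_ ?_
  all_goals
    simp (discharger := omega) only [dist_p hn, ← Int.cast_sub, val_intCast_eq_ite]
    grind

theorem not_isResolving_q_q (hab : a < b) (hba : 2 * (b - a) ≤ n) :
    ¬ IsResolving (Delta n) {q a, q b} := by
  have : NeZero n := ⟨by omega⟩
  obtain h | h | h | h | h : b = a + 1 ∨ (b = a + 2 ∨ b = a + 3) ∨
      (a + 4 ≤ b ∧ 2 * (b - a) + 2 ≤ n) ∨ (a + 4 ≤ b ∧ 2 * (b - a) = n) ∨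
        (a + 4 ≤ b ∧ 2 * (b - a) + 1 = n) := by omega
  case' inl =>
    refine not_isResolving_pair (u := q (a + 2 : ℤ)) (v := s (a + 1 : ℤ)) nofun ?_ ?_
  case' inr.inl => refine not_isResolving_pair (u := q (a + 1 : ℤ)) (v := s a) nofun ?_ ?_
  case' inr.inr.inl =>
    refine not_isResolving_pair (u := q (a - 1 : ℤ)) (v := s (a - 1 : ℤ)) nofun ?_ ?_
  case' inr.inr.inr.inl =>
    refine not_isResolving_pair (u := s (a - 2 : ℤ)) (v := s a)
      (mt s.inj (intCast_ne_intCast (by omega) (by omega))) ?_ ?_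
  case' inr.inr.inr.inr =>
    refine not_isResolving_pair (u := q (a - 1 : ℤ)) (v := s a) nofun ?_ ?_
  all_goals
    simp (discharger := omega) only [dist_q hn, ← Int.cast_sub, val_intCast_eq_ite]
    grind

theorem not_isResolving_s_s (hab : a < b) (hba : 2 * (b - a) ≤ n) :
    ¬ IsResolving (Delta n) {s a, s b} := by
  have : NeZero n := ⟨by omega⟩
  obtain h | h | h : (b = a + 1 ∨ b = a + 3) ∨ (b = a + 2 ∨ b = a + 4) ∨ a + 5 ≤ b := by omega
  case' inl =>
    refine not_isResolving_pair (u := q (b - 1 : ℤ)) (v := s (b - 2 : ℤ)) nofun ?_ ?_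
  case' inr.inl =>
    refine not_isResolving_pair (u := q (b - 2 : ℤ)) (v := s (b - 3 : ℤ)) nofun ?_ ?_
  case' inr.inr =>
    refine not_isResolving_pair (u := p (a + 1 : ℤ)) (v := r (a + 2 : ℤ)) nofun ?_ ?_
  all_goals
    simp (discharger := omega) only [dist_s hn, ← Int.cast_sub, val_intCast_eq_ite]
    grind

theorem not_isResolving_p_q (hab : a ≤ b) (hba : b < a + n) :
    ¬ IsResolving (Delta n) {p a, q b} := by
  have : NeZero n := ⟨by omega⟩
  obtain h | h | h | h | h : (a < b ∧ 2 * (b - a) + 2 ≤ n) ∨ n + 2 ≤ 2 * (b - a) ∨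
      2 * (b - a) = n ∨ (b = a ∨ 2 * (b - a) + 1 = n) ∨ 2 * (b - a) = n + 1 := by omega
  case' inl =>
    refine not_isResolving_pair (u := q (b + 1 : ℤ)) (v := s (b - 1 : ℤ)) nofun ?_ ?_
  case' inr.inl =>
    refine not_isResolving_pair (u := q (b - 1 : ℤ)) (v := s (b - 1 : ℤ)) nofun ?_ ?_
  case' inr.inr.inl =>
    refine not_isResolving_pair (u := s (b - 2 : ℤ)) (v := s b)
      (mt s.inj (intCast_ne_intCast (by omega) (by omega))) ?_ ?_
  case' inr.inr.inr.inl =>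
    refine not_isResolving_pair (u := s (b - 1 : ℤ)) (v := s b)
      (mt s.inj (intCast_ne_intCast (by omega) (by omega))) ?_ ?_
  case' inr.inr.inr.inr =>
    refine not_isResolving_pair (u := s (a - 1 : ℤ)) (v := s a)
      (mt s.inj (intCast_ne_intCast (by omega) (by omega))) ?_ ?_
  all_goals
    simp (discharger := omega) only [dist_p hn, dist_q hn, ← Int.cast_sub, val_intCast_eq_ite]
    grind

theorem not_isResolving_p_s (hab : a ≤ b) (hba : b < a + n) :
    ¬ IsResolving (Delta n) {p a, s b} := by
  have : NeZero n := ⟨by omega⟩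
  obtain h | h | h | h | h : (a < b ∧ 2 * (b - a) + 2 ≤ n) ∨
      (n ≤ 2 * (b - a) + 1 ∧ a < b ∧ b + 3 ≤ a + n) ∨ (n = 3 ∨ b + 1 = a + n) ∨
        (4 ≤ n ∧ b + 2 = a + n) ∨ (4 ≤ n ∧ b = a) := by omega
  case' inl =>
    refine not_isResolving_pair (u := p (b + 1 : ℤ)) (v := r (b - 1 : ℤ)) nofun ?_ ?_
  case' inr.inl =>
    refine not_isResolving_pair (u := p (b + 1 : ℤ)) (v := r (b + 2 : ℤ)) nofun ?_ ?_
  case' inr.inr.inl =>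
    refine not_isResolving_pair (u := p (a - 1 : ℤ)) (v := p (a + 1 : ℤ))
      (mt p.inj (intCast_ne_intCast (by omega) (by omega))) ?_ ?_
  case' inr.inr.inr.inl =>
    refine not_isResolving_pair (u := q (a - 2 : ℤ)) (v := s (a - 1 : ℤ)) nofun ?_ ?_
  case' inr.inr.inr.inr =>
    refine not_isResolving_pair (u := p (a + 2 : ℤ)) (v := r (a - 1 : ℤ)) nofun ?_ ?_
  all_goals
    simp (discharger := omega) only [dist_p hn, dist_s hn, ← Int.cast_sub, val_intCast_eq_ite]
    grind

theorem not_isResolving_q_s (hab : a ≤ b) (hba : b < a + n) :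
    ¬ IsResolving (Delta n) {q a, s b} := by
  have : NeZero n := ⟨by omega⟩
  obtain h | h | h | h : (b = a ∨ (n = 3 ∧ b = a + 1) ∨ (a + 3 ≤ b ∧ 2 * (b - a) + 2 ≤ n)) ∨
      (n ≤ 2 * (b - a) + 1 ∧ b + 5 ≤ a + n) ∨
        ((4 ≤ n ∧ b = a + 1) ∨ (a + 3 ≤ b ∧ (b + 4 = a + n ∨ b + 3 = a + n))) ∨
          (a + 2 ≤ b ∧ (b = a + 2 ∨ a + n ≤ b + 2)) := by omega
  case' inl =>
    refine not_isResolving_pair (u := q (b + 1 : ℤ)) (v := s (b - 1 : ℤ)) nofun ?_ ?_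
  case' inr.inl =>
    refine not_isResolving_pair (u := q (b + 1 : ℤ)) (v := s (b + 1 : ℤ)) nofun ?_ ?_
  case' inr.inr.inl =>
    refine not_isResolving_pair (u := q (a - 1 : ℤ)) (v := s (a - 2 : ℤ)) nofun ?_ ?_
  case' inr.inr.inr =>
    refine not_isResolving_pair (u := q (a + 2 : ℤ)) (v := s (a + 1 : ℤ)) nofun ?_ ?_
  all_goals
    simp (discharger := omega) only [dist_q hn, dist_s hn, ← Int.cast_sub, val_intCast_eq_ite]
    grind

end LowerBound

theorem not_isResolving_pair_of_ne (hn : 3 ≤ n) {x y : HCLVertex n} (hxy : x ≠ y) :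
    ¬ IsResolving (Delta n) {x, y} := by
  have : NeZero n := ⟨by omega⟩
  have symm (x y : HCLVertex n) (h : ¬ IsResolving (Delta n) {x, y}) :
      ¬ IsResolving (Delta n) {y, x} := by rwa [Set.pair_comm]
  have p_q : ∀ c d : ZMod n, ¬ IsResolving (Delta n) {p c, q d} :=
    forall_zmod_of_forall_intCast fun _ _ ↦ not_isResolving_p_q hn
  have p_s : ∀ c d : ZMod n, ¬ IsResolving (Delta n) {p c, s d} :=
    forall_zmod_of_forall_intCast fun _ _ ↦ not_isResolving_p_s hn
  have q_s : ∀ c d : ZMod n, ¬ IsResolving (Delta n) {q c, s d} :=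
    forall_zmod_of_forall_intCast fun _ _ ↦ not_isResolving_q_s hn
  have p_p : ∀ c d : ZMod n, c ≠ d → ¬ IsResolving (Delta n) {p c, p d} :=
    forall_ne_zmod_of_forall_intCast (fun _ _ ↦ symm _ _) fun _ _ ↦ not_isResolving_p_p hn
  have q_q : ∀ c d : ZMod n, c ≠ d → ¬ IsResolving (Delta n) {q c, q d} :=
    forall_ne_zmod_of_forall_intCast (fun _ _ ↦ symm _ _) fun _ _ ↦ not_isResolving_q_q hn
  have s_s : ∀ c d : ZMod n, c ≠ d → ¬ IsResolving (Delta n) {s c, s d} :=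
    forall_ne_zmod_of_forall_intCast (fun _ _ ↦ symm _ _) fun _ _ ↦ not_isResolving_s_s hn
  have r_any (c : ZMod n) (y) : ¬ IsResolving (Delta n) {r c, y} :=
    not_isResolving_r (by omega) c y
  match x, y with
  | r c, y => exact r_any c y
  | x, r d => exact symm _ _ (r_any d x)
  | p c, q d => exact p_q c d
  | q c, p d => exact symm _ _ (p_q d c)
  | p c, s d => exact p_s c d
  | s c, p d => exact symm _ _ (p_s d c)
  | q c, s d => exact q_s c d
  | s c, q d => exact symm _ _ (q_s d c)
  | p c, p d => exact p_p c d (ne_of_apply_ne p hxy)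
  | q c, q d => exact q_q c d (ne_of_apply_ne q hxy)
  | s c, s d => exact s_s c d (ne_of_apply_ne s hxy)

end Delta

namespace HCLVertex

variable {n : ℕ}

/-- The index of the family of a vertex in the order `p, q, r, s`, which is its distance to the
cycle of the `p t`. -/
def level : HCLVertex n → ℕ
  | p _ => 0
  | q _ => 1
  | r _ => 2
  | s _ => 3

/-- The position `t` of a vertex in its family. -/
def column : HCLVertex n → ZMod n
  | p t | q t | r t | s t => t

theorem eq_of_level_eq_of_column_eq {u v : HCLVertex n} (hl : u.level = v.level)
    (hc : u.column = v.column) : u = v := by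
  cases u <;> cases v <;> simp_all [level, column]

theorem level_le (u : HCLVertex n) : u.level ≤ 3 := by
  cases u <;> simp [level]

end HCLVertex

namespace Delta

variable {n : ℕ}

/-- The vertices of the `p`-cycle nearest to `u` form an arc with `u.level - 1` edges (none on
level `0`, by truncation) that starts at the column of `u`. -/
theorem dist_p_eq_level_add (hn : 3 ≤ n) (c : ZMod n) (u : HCLVertex n) :
    (Delta n).dist (p c) u =
      u.level + min (u.column - c).val (n - (u.level - 1) - (u.column - c).val) := by
  rw [dist_p hn]
  cases u <;> simp [level, column]

theorem dist_p_neg_one_eq_add_one_iff (hn : 3 ≤ n) (u : HCLVertex n) :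
    (Delta n).dist (p (-1)) u = (Delta n).dist (p 0) u + 1 ↔
      2 * u.column.val + (u.level - 1) + 2 ≤ n := by
  have : NeZero n := ⟨by omega⟩
  have hi := u.column.val_lt
  have hl := u.level_le
  simp only [dist_p_eq_level_add hn, sub_zero, sub_neg_eq_add,
    val_add_one_eq_ite]
  grind

theorem isResolving_p_p_p (hn : 4 ≤ n) :
    IsResolving (Delta n) {p (-1), p 0, p ((n + 1) / 2 : ℕ)} := by
  intro u v
  contrapose!
  intro h
  have : NeZero n := ⟨by omega⟩
  have h₁ := h (p (-1)) (by simp)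
  have h₀ := h (p 0) (by simp)
  have h₂ := h (p ((n + 1) / 2 : ℕ)) (by simp)
  have side := dist_p_neg_one_eq_add_one_iff (by omega) u
  rw [h₁, h₀, dist_p_neg_one_eq_add_one_iff (by omega) v] at side
  have hu := u.column.val_lt
  have hv := v.column.val_lt
  have hlu := u.level_le
  have hlv := v.level_le
  suffices u.level = v.level ∧ u.column.val = v.column.val from
    eq_of_level_eq_of_column_eq this.1 (ZMod.val_injective n this.2)
  simp (discharger := omega) only [dist_p_eq_level_add (n := n), sub_zero, sub_neg_eq_add,
    val_add_one_eq_ite, val_sub_natCast_eq_ite] at h₀ h₁ h₂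
  clear h
  generalize u.level = ℓ, v.level = ℓ', u.column.val = i, v.column.val = j at *
  have level_eq : ℓ = ℓ' := by
    interval_cases ℓ <;> interval_cases ℓ' <;> grind
  subst level_eq
  exact ⟨rfl, by interval_cases ℓ <;> grind⟩

theorem isResolving_p_r_r : IsResolving (Delta 3) {p 0, r 0, r 1} := by
  simp only [IsResolving, Set.mem_insert_iff, Set.mem_singleton_iff, exists_eq_or_imp,
    exists_eq_left, dist_p le_rfl, dist_r le_rfl]
  rintro (t | t | t | t) (t' | t' | t' | t') <;> revert t t' <;> decide

theorem exists_isResolving_card_eq_three (hn : 3 ≤ n) :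
    ∃ W : Finset (HCLVertex n), W.card = 3 ∧ IsResolving (Delta n) ↑W := by
  obtain rfl | hn := hn.eq_or_lt
  · exact ⟨{p 0, r 0, r 1}, rfl, by simpa using isResolving_p_r_r⟩
  have ne {a b : ℤ} (h₁ : a < b) (h₂ : b < a + n) : (p a : HCLVertex n) ≠ p b :=
    mt p.inj (intCast_ne_intCast h₁ h₂)
  refine ⟨{p (-1 : ℤ), p (0 : ℤ), p ((n + 1) / 2 : ℕ)}, ?_, ?_⟩
  · rw [← Int.cast_natCast ((n + 1) / 2)]
    exact Finset.card_eq_three.2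
      ⟨_, _, _, ne (by omega) (by omega), ne (by omega) (by omega), ne (by omega) (by omega), rfl⟩
  · simpa using isResolving_p_p_p hn

end Delta

theorem delta_metric_dimension_eq_three_general (n : ℕ) (hn : 3 ≤ n) :
    (∃ W : Finset (HCLVertex n), W.card = 3 ∧ IsResolving (Delta n) ↑W) ∧
    (∀ W : Finset (HCLVertex n), W.card = 2 → ¬ IsResolving (Delta n) ↑W) := by
  refine ⟨Delta.exists_isResolving_card_eq_three hn, fun W hW ↦ ?_⟩
  obtain ⟨x, y, hxy, rfl⟩ := Finset.card_eq_two.1 hW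
  simpa using Delta.not_isResolving_pair_of_ne hn hxy

theorem delta_metric_dimension_eq_three (n : ℕ) (hn : 6 ≤ n) :
    (∃ W : Finset (HCLVertex n), W.card = 3 ∧ IsResolving (Delta n) ↑W) ∧
    (∀ W : Finset (HCLVertex n), W.card = 2 → ¬ IsResolving (Delta n) ↑W) :=
  delta_metric_dimension_eq_three_general n (by omega)
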